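/- arXiv:2407.13563 — 2 statements merged into one kernel-verified Lean document; each statement's English description precedes it below -/
import Mathlib

section
/- Let R ∈ ℂ(z)^{m×m} be a nonzero para-skew-Hermitian rational matrix. Then there do not exist a natural number p and constant matrices A ∈ ℂ^{p×p}, B, C ∈ ℂ^{p×m}, D ∈ ℂ^{m×m} with det(z·A − A^H) ≠ 0 in ℂ(z) such that R = (z·D − D^H) + (z·B^H − C^H)·(z·A − A^H)⁻¹·(z·C − B); that is, R is not the transfer function of any *-anti-palindromic linear system matrix. -/
open Polynomial Matrix

set_option synthInstance.maxHeartbeats 1000000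
set_option maxHeartbeats 1000000

noncomputable section

/-- Coefficientwise complex conjugation on rational functions. -/
def conjRF : RatFunc ℂ →+* RatFunc ℂ :=
  RatFunc.mapRingHom (Polynomial.mapRingHom (starRingEnd ℂ))
    (by
      intro x hx
      simp only [Submonoid.mem_comap, mem_nonZeroDivisors_iff_ne_zero] at *
      intro h
      exact hx (Polynomial.map_injective _ (starRingEnd ℂ).injective (by simpa using h)))

/-- Substitution of `g` for the variable in `f`. -/
def subst (g f : RatFunc ℂ) : RatFunc ℂ := RatFunc.eval (algebraMap ℂ (RatFunc ℂ)) g f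

/-- Constant complex matrices regarded as matrices over `ℂ(z)`. -/
def toRF {n o : Type*} (A : Matrix n o ℂ) : Matrix n o (RatFunc ℂ) :=
  A.map (algebraMap ℂ (RatFunc ℂ))

/-- The para-conjugate `R^*(1/z)`. -/
def paraConj {n : Type*} (R : Matrix n n (RatFunc ℂ)) : Matrix n n (RatFunc ℂ) :=
  fun i j => subst (RatFunc.X)⁻¹ (conjRF (R j i))

def IsParaHermitian {n : Type*} (R : Matrix n n (RatFunc ℂ)) : Prop := paraConj R = R

def IsParaSkewHermitian {n : Type*} (R : Matrix n n (RatFunc ℂ)) : Prop := paraConj R = -R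

/-- The variable `z` of `ℂ(z)`. -/
def zz : RatFunc ℂ := RatFunc.X


theorem evX_ne (q : ℂ[X]) (hq : q ≠ 0) :
    q.eval₂ (algebraMap ℂ (RatFunc ℂ)) (RatFunc.X)⁻¹ ≠ 0 := by
  have ht : Transcendental ℂ (RatFunc.X : RatFunc ℂ) := RatFunc.transcendental_X
  have ht' : Transcendental ℂ ((RatFunc.X : RatFunc ℂ)⁻¹) := fun h => ht (by simpa using h.inv)
  intro h
  exact hq ((transcendental_iff.mp ht') q (by simpa [Polynomial.aeval_def] using h))

def substHom : RatFunc ℂ →+* RatFunc ℂ where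
  toFun := subst (RatFunc.X)⁻¹
  map_one' := by simp [subst]
  map_zero' := by simp [subst]
  map_mul' x y := RatFunc.eval_mul _ _ (evX_ne _ x.denom_ne_zero) (evX_ne _ y.denom_ne_zero)
  map_add' x y := RatFunc.eval_add _ _ (evX_ne _ x.denom_ne_zero) (evX_ne _ y.denom_ne_zero)

def sg : RatFunc ℂ →+* RatFunc ℂ := substHom.comp conjRF

theorem conjRF_poly (q : ℂ[X]) : conjRF (algebraMap ℂ[X] (RatFunc ℂ) q) =
    algebraMap ℂ[X] (RatFunc ℂ) (q.map (starRingEnd ℂ)) := by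
  have := RatFunc.map_apply_div (Polynomial.mapRingHom (starRingEnd ℂ))
    (by
      intro x hx
      simp only [Submonoid.mem_comap, mem_nonZeroDivisors_iff_ne_zero] at *
      intro h
      exact hx (Polynomial.map_injective _ (starRingEnd ℂ).injective (by simpa using h))) q 1
  rw [map_one, map_one, map_one, div_one, div_one] at this
  exact this

theorem sg_X : sg zz = zz⁻¹ := by
  have : conjRF zz = RatFunc.X := by
    rw [zz, ← RatFunc.algebraMap_X, conjRF_poly, Polynomial.map_X]
  simp only [sg, RingHom.comp_apply, this]
  change RatFunc.eval (algebraMap ℂ (RatFunc ℂ)) (RatFunc.X)⁻¹ RatFunc.X = _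
  rw [RatFunc.eval_X, zz]

theorem sg_C (a : ℂ) : sg (algebraMap ℂ (RatFunc ℂ) a) = algebraMap ℂ (RatFunc ℂ) (star a) := by
  have : conjRF (algebraMap ℂ (RatFunc ℂ) a) = RatFunc.C (star a) := by
    rw [RatFunc.algebraMap_eq_C, ← RatFunc.algebraMap_C, conjRF_poly, Polynomial.map_C,
      RatFunc.algebraMap_C]
    rfl
  simp only [sg, RingHom.comp_apply, this]
  change RatFunc.eval (algebraMap ℂ (RatFunc ℂ)) (RatFunc.X)⁻¹ (RatFunc.C (star a)) = _
  rw [RatFunc.eval_C]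

def ps {n o : Type*} (M : Matrix n o (RatFunc ℂ)) : Matrix o n (RatFunc ℂ) := (M.map sg)ᵀ

theorem ps_mul {n o k : Type*} [Fintype o] (M : Matrix n o (RatFunc ℂ))
    (N : Matrix o k (RatFunc ℂ)) : ps (M * N) = ps N * ps M := by
  simp [ps, Matrix.map_mul]

theorem ps_add {n o : Type*} (M N : Matrix n o (RatFunc ℂ)) : ps (M + N) = ps M + ps N := by
  ext i j; simp [ps]

theorem zz_ne : zz ≠ 0 := RatFunc.X_ne_zero

theorem ps_pencil {n o : Type*} (A : Matrix n o ℂ) (B : Matrix o n ℂ) :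
    ps (zz • toRF A - toRF Bᴴ) = (-zz⁻¹) • (zz • toRF B - toRF Aᴴ) := by
  ext i j
  have := zz_ne
  simp only [ps, toRF, Matrix.transpose_apply, Matrix.map_apply, Matrix.sub_apply,
    Matrix.smul_apply, smul_eq_mul, map_sub, map_mul, sg_X, sg_C, Matrix.conjTranspose_apply,
    star_star]
  field_simp
  ring

theorem zz_ne_one : zz ≠ 1 := by
  intro h
  have h2 := congrArg (RatFunc.eval (RingHom.id ℂ) 0) h
  simp [zz] at h2

/-- a nonzero para-skew-Hermitian rational matrix is not the transfer function of any
`*`-anti-palindromic linear system matrix. -/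
theorem paraSkewHermitian_no_antipalindromic_system_matrix (m : ℕ)
    (R : Matrix (Fin m) (Fin m) (RatFunc ℂ)) (hR : R ≠ 0) (hpara : IsParaSkewHermitian R) :
    ¬ ∃ (p : ℕ) (A : Matrix (Fin p) (Fin p) ℂ) (B C : Matrix (Fin p) (Fin m) ℂ)
        (D : Matrix (Fin m) (Fin m) ℂ),
      (zz • toRF A - toRF Aᴴ).det ≠ 0 ∧
      R = (zz • toRF D - toRF Dᴴ) +
        (zz • toRF Bᴴ - toRF Cᴴ) * (zz • toRF A - toRF Aᴴ)⁻¹ * (zz • toRF C - toRF B) := by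
  rintro ⟨p, A, B, C, D, hdet, h⟩
  apply hR
  have hz := zz_ne
  have hu : IsUnit (zz • toRF A - toRF Aᴴ).det := isUnit_iff_ne_zero.mpr hdet
  have h1 : ps (zz • toRF Bᴴ - toRF Cᴴ) = (-zz⁻¹) • (zz • toRF C - toRF B) := by
    simpa using ps_pencil Bᴴ C
  have h2 : ps (zz • toRF C - toRF B) = (-zz⁻¹) • (zz • toRF Bᴴ - toRF Cᴴ) := by
    simpa using ps_pencil C Bᴴ
  have h3 := ps_pencil A A
  have h4 := ps_pencil D D
  generalize zz • toRF A - toRF Aᴴ = P at *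
  generalize zz • toRF D - toRF Dᴴ = Q at *
  generalize zz • toRF Bᴴ - toRF Cᴴ = S at *
  generalize zz • toRF C - toRF B = T at *
  have h5 : ps P⁻¹ = (-zz) • P⁻¹ := by
    have e : ps P⁻¹ * ps P = 1 := by
      rw [← ps_mul, Matrix.mul_nonsing_inv _ hu]
      ext i j
      simp [ps, Matrix.one_apply, apply_ite sg, eq_comm]
    rw [h3, Matrix.mul_smul] at e
    have e2 : ps P⁻¹ * P = (-zz) • (1 : Matrix (Fin p) (Fin p) (RatFunc ℂ)) := by
      rw [← e, smul_smul]; simp [hz]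
    calc ps P⁻¹ = ps P⁻¹ * P * P⁻¹ := by rw [Matrix.mul_assoc, Matrix.mul_nonsing_inv _ hu, Matrix.mul_one]
      _ = _ := by rw [e2]; simp
  have h6 : ps R = (-zz⁻¹) • R := by
    rw [h, ps_add, ps_mul, ps_mul, h1, h2, h4, h5]
    simp only [Matrix.smul_mul, Matrix.mul_smul, smul_smul, smul_add, Matrix.mul_assoc]
    congr 2
    field_simp
  have h7 : ps R = -R := hpara
  rw [h7] at h6
  ext i j
  have h8 := congrFun (congrFun h6 i) j
  simp only [Matrix.neg_apply, Matrix.smul_apply, smul_eq_mul] at h8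
  have h9 : (zz - 1) * R i j = 0 := by
    field_simp at h8
    linear_combination (-1 : RatFunc ℂ) * h8
  rcases mul_eq_zero.mp h9 with h | h
  · exact absurd (sub_eq_zero.mp h) zz_ne_one
  · simpa using h
end
end

section
/- Let R ∈ ℂ(z)^{m×m} and define G ∈ ℂ(z)^{m×m} entrywise by G_{ij} := the substitution of (1 + z)/(1 − z) into R_{ij}. Then R is para-Hermitian if and only if G is *-even, i.e. G^* = G(−z), where G(−z) is the matrix obtained from G by entrywise substitution of −z for z. -/
open Polynomial Matrix

set_option synthInstance.maxHeartbeats 1000000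
set_option maxHeartbeats 1000000

noncomputable section

/-- Coefficientwise-conjugate transpose of a matrix over `ℂ(z)`. -/
def conjT {a b : Type*} (R : Matrix a b (RatFunc ℂ)) : Matrix b a (RatFunc ℂ) :=
  fun i j => conjRF (R j i)

/-- Entrywise substitution of `g` into a matrix over `ℂ(z)`. -/
def substMat {a b : Type*} (g : RatFunc ℂ) (R : Matrix a b (RatFunc ℂ)) :
    Matrix a b (RatFunc ℂ) :=
  fun i j => subst g (R i j)

theorem ratFunc_hom_ext (a b : RatFunc ℂ →+* RatFunc ℂ)
    (hC : ∀ c : ℂ, a (algebraMap ℂ _ c) = b (algebraMap ℂ _ c))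
    (hX : a RatFunc.X = b RatFunc.X) : a = b := by
  apply IsLocalization.ringHom_ext (nonZeroDivisors ℂ[X])
  apply Polynomial.ringHom_ext
  · intro c
    simpa [RatFunc.algebraMap_eq_C] using hC c
  · simpa using hX

theorem exists_substHom (g : RatFunc ℂ) (hg : Transcendental ℂ g) :
    ∃ s : RatFunc ℂ →+* RatFunc ℂ, (∀ f, subst g f = s f) ∧
      (∀ c : ℂ, s (algebraMap ℂ _ c) = algebraMap ℂ _ c) ∧ s RatFunc.X = g := by
  have hinj : ∀ p : ℂ[X], p ≠ 0 → aeval g p ≠ 0 := fun p hp h =>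
    hp ((transcendental_iff.1 hg) p h)
  have key : ∀ f : RatFunc ℂ, Polynomial.eval₂ (algebraMap ℂ (RatFunc ℂ)) g f.denom ≠ 0 :=
    fun f => hinj _ f.denom_ne_zero
  refine ⟨{ toFun := subst g, map_one' := ?_, map_mul' := ?_, map_zero' := ?_, map_add' := ?_ },
    fun f => rfl, ?_, ?_⟩
  · exact RatFunc.eval_one _ _
  · intro x y
    exact RatFunc.eval_mul _ _ (key x) (key y)
  · exact RatFunc.eval_zero _ _
  · intro x y
    exact RatFunc.eval_add _ _ (key x) (key y)
  · intro c
    change RatFunc.eval _ _ _ = _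
    rw [RatFunc.algebraMap_eq_C, RatFunc.eval_C]
  · exact RatFunc.eval_X _ _

theorem map_algebraMap_poly (φ : ℂ[X] →+* ℂ[X])
    (hφ : nonZeroDivisors ℂ[X] ≤ (nonZeroDivisors ℂ[X]).comap φ) (p : ℂ[X]) :
    RatFunc.map φ hφ (algebraMap _ (RatFunc ℂ) p) = algebraMap _ (RatFunc ℂ) (φ p) := by
  have := RatFunc.map_apply_div φ hφ p 1
  simpa using this

theorem conjRF_C (c : ℂ) : conjRF (algebraMap ℂ _ c) = algebraMap ℂ _ (starRingEnd ℂ c) := by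
  rw [RatFunc.algebraMap_eq_C, ← RatFunc.algebraMap_C, ← RatFunc.algebraMap_C, conjRF,
    RatFunc.coe_mapRingHom_eq_coe_map, map_algebraMap_poly]
  simp

theorem conjRF_X : conjRF RatFunc.X = RatFunc.X := by
  rw [← RatFunc.algebraMap_X, conjRF,
    RatFunc.coe_mapRingHom_eq_coe_map, map_algebraMap_poly]
  simp

/-- `R` is para-Hermitian iff `G(s) := R((1+s)/(1-s))` is `*`-even. -/
theorem paraHermitian_iff_bilinear_even (m : ℕ)
    (R G : Matrix (Fin m) (Fin m) (RatFunc ℂ))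
    (hG : G = substMat ((1 + zz) / (1 - zz)) R) :
    IsParaHermitian R ↔ conjT G = substMat (-zz) G := by
  subst hG
  have tX : Transcendental ℂ (RatFunc.X : RatFunc ℂ) := RatFunc.transcendental_X
  have a1 : IsAlgebraic ℂ (1 : RatFunc ℂ) := isAlgebraic_one
  have n0 : (RatFunc.X : RatFunc ℂ) ≠ 0 := fun h => tX (h ▸ isAlgebraic_zero)
  have n1 : 1 - (RatFunc.X : RatFunc ℂ) ≠ 0 := fun h => tX ((sub_eq_zero.1 h) ▸ a1)
  have n2 : 1 + (RatFunc.X : RatFunc ℂ) ≠ 0 := fun h => tX ((eq_neg_of_add_eq_zero_right h) ▸ a1.neg)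
  have t1 : Transcendental ℂ ((RatFunc.X : RatFunc ℂ)⁻¹) := fun h => tX (by simpa using h.inv)
  have t2 : Transcendental ℂ (-(RatFunc.X : RatFunc ℂ)) := fun h => tX (by simpa using h.neg)
  have t3 : Transcendental ℂ ((1 + RatFunc.X) / (1 - RatFunc.X) : RatFunc ℂ) := fun h => tX (by
    have e : (RatFunc.X : RatFunc ℂ) = ((1 + RatFunc.X) / (1 - RatFunc.X) - 1) *
        ((1 + RatFunc.X) / (1 - RatFunc.X) + 1)⁻¹ := by
      have : (1 + RatFunc.X) / (1 - RatFunc.X) + 1 = (2 : RatFunc ℂ) / (1 - RatFunc.X) := by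
        field_simp; ring
      rw [this]
      field_simp; ring
    rw [e]
    exact (h.sub a1).mul (h.add a1).inv)
  obtain ⟨si, hi, hiC, hiX⟩ := exists_substHom _ t1
  obtain ⟨sn, hn, hnC, hnX⟩ := exists_substHom _ t2
  obtain ⟨sw, hw, hwC, hwX⟩ := exists_substHom _ t3
  have e1 : (sn.comp sn) = RingHom.id _ := ratFunc_hom_ext _ _ (fun c => by
    simp only [RingHom.comp_apply, hnC, RingHom.id_apply]) (by simp [hnX])
  have e2 : (sn.comp conjRF).comp sw = (sw.comp si).comp conjRF := by
    apply ratFunc_hom_ext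
    · intro c
      simp only [RingHom.comp_apply, hwC, conjRF_C, hnC, hiC]
    · simp only [RingHom.comp_apply, hwX, conjRF_X, hiX, map_div₀, map_add, map_sub, map_one,
        map_inv₀, hnX, inv_div]
      ring
  have e1' : ∀ f, sn (sn f) = f := fun f => RingHom.congr_fun e1 f
  have e2' : ∀ f, sn (conjRF (sw f)) = sw (si (conjRF f)) := fun f => RingHom.congr_fun e2 f
  unfold IsParaHermitian
  rw [← Matrix.ext_iff, ← Matrix.ext_iff]
  refine forall_congr' fun i => forall_congr' fun j => ?_
  simp only [paraConj, conjT, substMat, zz, hi, hn, hw]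
  rw [← sw.injective.eq_iff, ← e2', ← sn.injective.eq_iff, e1']
end
end
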